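/- (Equivalence of dynamic user equilibrium and the variational inequality, Friesz et al. 1993, as stated in the paper.) Let h* ∈ Λ₀ and suppose for each p ∈ P an effective path delay Ψ_p(·,h*) ∈ L²[t0,tf] with Ψ_p(t,h*) ≥ 0 for a.e. t is given; set v_ij = min_{p∈P_ij} essinf_{t∈[t0,tf]} Ψ_p(t,h*). Then h* is a dynamic user equilibrium if and only if h* solves the variational inequality VI(Ψ,Λ₀): ∑_{p∈P} ∫_{t0}^{tf} Ψ_p(t,h*)(h_p(t) − h*_p(t)) dt ≥ 0 for all h ∈ Λ₀. -/

import Mathlib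

open MeasureTheory

/-- Lebesgue measure restricted to the planning horizon `[t0, tf]`. -/
noncomputable def timeMeasure (t0 tf : ℝ) : Measure ℝ :=
  volume.restrict (Set.Icc t0 tf)

/-- The feasible set of path flows `Λ₀ ⊆ (L²[t0,tf])^{|P|}`. -/
noncomputable def Lambda0 (t0 tf : ℝ) {W ι : Type} [Fintype ι] [DecidableEq W]
    (od : ι → W) (Q : W → ℝ) :
    Set (PiLp 2 fun _ : ι => Lp ℝ 2 (timeMeasure t0 tf)) :=
  {h | (∀ p, ∀ᵐ t ∂(timeMeasure t0 tf), 0 ≤ (h p) t) ∧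
    ∀ w, ∑ p ∈ Finset.univ.filter fun p => od p = w,
        ∫ t, (h p) t ∂(timeMeasure t0 tf) = Q w}

/-!
For every `u : W → ℝ` the demand constraints give `∑ p, u (od p) * ∫ h p = ∑ w, u w * Q w`, the
same value for all feasible `h`. Taking `u = v`, the total delay `∑ p, ∫ Ψ p * h p` exceeds the
constant `∑ w, v w * Q w` by the total excess delay `∑ p, ∫ (Ψ p - v (od p)) * h p`. The excess is
nonnegative, and it vanishes exactly when `h` uses only departures of minimal delay, i.e. when `h`
is an equilibrium. Its infimum over the feasible flows is zero: for `ε > 0`, send the whole demand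
of `w` along a minimizing path, at departure times where the delay is below `v w + ε`. Since the
variational inequality says that `h*` minimizes the total delay, it says that the excess of `h*`
vanishes.
-/

open Filter
open scoped ENNReal Topology

section EssInf

variable {α β : Type*}

theorem isCoboundedUnder_ge_of_countableInterFilter [LinearOrder β]
    [(atTop : Filter β).IsCountablyGenerated] {l : Filter α} [l.NeBot] [CountableInterFilter l]
    (f : α → β) : l.IsCoboundedUnder (· ≥ ·) f := by
  have : Nonempty β := (nonempty_of_neBot l).map f
  obtain ⟨u, hu⟩ := exists_seq_tendsto (atTop : Filter β)
  obtain ⟨n, hn⟩ : ∃ n, ∃ᶠ t in l, f t ≤ u n := by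
    by_contra! hlt
    obtain ⟨t, ht⟩ := (eventually_countable_forall.2 hlt).exists
    obtain ⟨n, hn⟩ := (hu.eventually_ge_atTop (f t)).exists
    exact (ht n).not_ge hn
  exact .of_frequently_le hn

theorem frequently_lt_of_essInf_lt [ConditionallyCompleteLinearOrder β]
    [(atTop : Filter β).IsCountablyGenerated] [MeasurableSpace α] {μ : Measure α} [NeZero μ]
    {f : α → β} {b : β} (h : essInf f μ < b) : ∃ᶠ t in ae μ, f t < b :=
  frequently_lt_of_liminf_lt (isCoboundedUnder_ge_of_countableInterFilter f) h

theorem ae_le_of_isLeast_essInf [ConditionallyCompleteLinearOrder β] [TopologicalSpace β]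
    [FirstCountableTopology β] [OrderTopology β] [MeasurableSpace α] {μ : Measure α}
    {ι W : Type*} {od : ι → W} {Ψ : ι → α → β} {v : W → β}
    (hbdd : ∀ p, (ae μ).IsBoundedUnder (· ≥ ·) (Ψ p))
    (hv : ∀ w, IsLeast {x | ∃ p, od p = w ∧ x = essInf (Ψ p) μ} (v w)) (p : ι) :
    ∀ᵐ t ∂μ, v (od p) ≤ Ψ p t :=
  (ae_essInf_le (hbdd p)).mono fun _ => ((hv (od p)).2 ⟨p, rfl, rfl⟩).trans

end EssInf

theorem exists_Lp_nonneg_integral_eq {α : Type*} [MeasurableSpace α] {μ : Measure α} (r : ℝ≥0∞)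
    {B : Set α} (hB : MeasurableSet B) (hB_zero : μ B ≠ 0) (hB_top : μ B ≠ ∞)
    {c : ℝ} (hc : 0 ≤ c) :
    ∃ g : Lp ℝ r μ, (∀ᵐ t ∂μ, 0 ≤ g t) ∧ (∀ᵐ t ∂μ, t ∉ B → g t = 0) ∧ ∫ t, g t ∂μ = c := by
  let g : Lp ℝ r μ := indicatorConstLp r hB hB_top (c / μ.real B)
  have hg : g =ᵐ[μ] B.indicator fun _ => c / μ.real B := indicatorConstLp_coeFn
  refine ⟨g, ?_, indicatorConstLp_coeFn_notMem, ?_⟩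
  · filter_upwards [hg] with t ht
    rw [ht]
    exact Set.indicator_nonneg (fun _ _ => by positivity) t
  · rw [integral_indicatorConstLp, smul_eq_mul,
      mul_div_cancel₀ c ((measureReal_ne_zero_iff hB_top).2 hB_zero)]

theorem sum_comp_mul_eq_sum_mul_sum_fiber {ι W R : Type*} [Fintype ι] [Fintype W] [DecidableEq W]
    [NonUnitalNonAssocSemiring R] (od : ι → W) (u : W → R) (x : ι → R) :
    ∑ p, u (od p) * x p = ∑ w, u w * ∑ p with od p = w, x p := by
  rw [← Finset.sum_fiberwise Finset.univ od]
  refine Finset.sum_congr rfl fun w _ => ?_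
  rw [Finset.mul_sum]
  refine Finset.sum_congr rfl fun p hp => ?_
  rw [(Finset.mem_filter.1 hp).2]

section Flows

variable {α ι W : Type*} [MeasurableSpace α] {μ : Measure α} [Fintype ι] {r s : ℝ≥0∞}

/-- The set of path flows in `Lʳ(μ)` that are nonnegative and meet the demands `Q`: the analogue of
`Lambda0` over a general measure space of departure times, with exponent `r` in place of `2`. -/
def feasibleFlows [DecidableEq W] (μ : Measure α) (r : ℝ≥0∞) (od : ι → W) (Q : W → ℝ) :
    Set (ι → Lp ℝ r μ) :=
  {h | (∀ p, ∀ᵐ t ∂μ, 0 ≤ h p t) ∧ ∀ w, ∑ p with od p = w, ∫ t, h p t ∂μ = Q w}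

/-- The total delay incurred by the flow `h` when the path delays are frozen at `Ψ`; the
variational inequality at `h*` says that `h*` minimizes it over the feasible flows. -/
noncomputable def totalDelay (Ψ : ι → Lp ℝ s μ) (h : ι → Lp ℝ r μ) : ℝ :=
  ∑ p, ∫ t, Ψ p t * h p t ∂μ

theorem integrable_Lp_mul_Lp [s.HolderConjugate r] (f : Lp ℝ s μ) (g : Lp ℝ r μ) :
    Integrable (fun t => f t * g t) μ :=
  (Lp.memLp f).integrable_mul (Lp.memLp g)

theorem sum_integral_mul_sub_eq_totalDelay_sub [s.HolderConjugate r]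
    (Ψ : ι → Lp ℝ s μ) (h k : ι → Lp ℝ r μ) :
    ∑ p, ∫ t, Ψ p t * (h p t - k p t) ∂μ = totalDelay Ψ h - totalDelay Ψ k := by
  simp only [totalDelay, ← Finset.sum_sub_distrib, mul_sub,
    integral_sub (integrable_Lp_mul_Lp _ _) (integrable_Lp_mul_Lp _ _)]

variable [DecidableEq W] {od : ι → W} {Q : W → ℝ} {Ψ : ι → Lp ℝ s μ} {h : ι → Lp ℝ r μ}

theorem demand_nonneg_of_mem_feasibleFlows (hh : h ∈ feasibleFlows μ r od Q) (w : W) : 0 ≤ Q w :=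
  hh.2 w ▸ Finset.sum_nonneg fun p _ => integral_nonneg_of_ae (hh.1 p)

theorem ae_nonneg_sub_mul_of_mem_feasibleFlows {u : W → ℝ} (hh : h ∈ feasibleFlows μ r od Q)
    (hu : ∀ p, ∀ᵐ t ∂μ, u (od p) ≤ Ψ p t) (p : ι) :
    0 ≤ᵐ[μ] fun t => (Ψ p t - u (od p)) * h p t := by
  filter_upwards [hu p, hh.1 p] with t hΨt hht
  exact mul_nonneg (sub_nonneg.2 hΨt) hht

/-- The flow sending the departure rate `g w` of each origin-destination pair `w` along the single
path `path w`. -/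
def concentratedFlow [DecidableEq ι] (od : ι → W) (path : W → ι) (g : W → Lp ℝ r μ) :
    ι → Lp ℝ r μ :=
  fun p => if p = path (od p) then g (od p) else 0

theorem concentratedFlow_mem_feasibleFlows [DecidableEq ι] {path : W → ι} {g : W → Lp ℝ r μ}
    (hpath : ∀ w, od (path w) = w) (hg_nonneg : ∀ w, ∀ᵐ t ∂μ, 0 ≤ g w t)
    (hg_integral : ∀ w, ∫ t, g w t ∂μ = Q w) :
    concentratedFlow od path g ∈ feasibleFlows μ r od Q := by
  have hzero : ∀ᵐ t ∂μ, (0 : Lp ℝ r μ) t = 0 := Lp.coeFn_zero ℝ r μ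
  refine ⟨fun p => ?_, fun w => ?_⟩
  · rw [concentratedFlow]
    split_ifs
    · exact hg_nonneg _
    · exact hzero.mono fun _ ht => ht.ge
  · rw [Finset.sum_eq_single_of_mem (path w) (by simp [hpath])]
    · simp only [concentratedFlow, hpath, if_true, hg_integral]
    · intro p hp hne
      rw [concentratedFlow, (Finset.mem_filter.1 hp).2, if_neg hne]
      exact integral_eq_zero_of_ae hzero

variable [IsFiniteMeasure μ]

theorem integrable_Lp_of_holderConjugate (s : ℝ≥0∞) [s.HolderConjugate r] (g : Lp ℝ r μ) :
    Integrable g μ :=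
  (Lp.memLp g).integrable (ENNReal.HolderConjugate.one_le r s)

variable [s.HolderConjugate r]

theorem integrable_sub_const_mul (f : Lp ℝ s μ) (g : Lp ℝ r μ) (c : ℝ) :
    Integrable (fun t => (f t - c) * g t) μ := by
  simp only [sub_mul]
  exact (integrable_Lp_mul_Lp f g).sub ((integrable_Lp_of_holderConjugate s g).const_mul c)

theorem integral_sub_const_mul (f : Lp ℝ s μ) (g : Lp ℝ r μ) (c : ℝ) :
    ∫ t, (f t - c) * g t ∂μ = ∫ t, f t * g t ∂μ - c * ∫ t, g t ∂μ := by
  simp only [sub_mul]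
  rw [integral_sub (integrable_Lp_mul_Lp f g)
    ((integrable_Lp_of_holderConjugate s g).const_mul c), integral_const_mul]

variable [Fintype W] {u v : W → ℝ}

theorem totalDelay_eq_add_sum_excess (hh : h ∈ feasibleFlows μ r od Q) (u : W → ℝ) :
    totalDelay Ψ h = ∑ w, u w * Q w + ∑ p, ∫ t, (Ψ p t - u (od p)) * h p t ∂μ := by
  have hdemand : ∑ p, u (od p) * ∫ t, h p t ∂μ = ∑ w, u w * Q w := by
    simp only [sum_comp_mul_eq_sum_mul_sum_fiber od u, hh.2]
  simp only [integral_sub_const_mul, Finset.sum_sub_distrib, hdemand, totalDelay, add_sub_cancel]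

theorem sum_mul_demand_le_totalDelay (hh : h ∈ feasibleFlows μ r od Q)
    (hu : ∀ p, ∀ᵐ t ∂μ, u (od p) ≤ Ψ p t) : ∑ w, u w * Q w ≤ totalDelay Ψ h := by
  rw [totalDelay_eq_add_sum_excess hh u]
  refine le_add_of_nonneg_right (Finset.sum_nonneg fun p _ => ?_)
  exact integral_nonneg_of_ae (ae_nonneg_sub_mul_of_mem_feasibleFlows hh hu p)

theorem totalDelay_le_sum_mul_demand (hh : h ∈ feasibleFlows μ r od Q)
    (hu : ∀ p, ∀ᵐ t ∂μ, 0 < h p t → Ψ p t ≤ u (od p)) : totalDelay Ψ h ≤ ∑ w, u w * Q w := by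
  rw [totalDelay_eq_add_sum_excess hh u]
  refine add_le_of_nonpos_right (Finset.sum_nonpos fun p _ => integral_nonpos_of_ae ?_)
  filter_upwards [hu p, hh.1 p] with t hΨt hht
  rcases hht.eq_or_lt with hzero | hpos
  · simp [← hzero]
  · exact mul_nonpos_of_nonpos_of_nonneg (sub_nonpos.2 (hΨt hpos)) hht

theorem totalDelay_eq_sum_mul_demand_iff (hh : h ∈ feasibleFlows μ r od Q)
    (hu : ∀ p, ∀ᵐ t ∂μ, u (od p) ≤ Ψ p t) :
    totalDelay Ψ h = ∑ w, u w * Q w ↔ ∀ p, ∀ᵐ t ∂μ, 0 < h p t → Ψ p t = u (od p) := by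
  refine ⟨fun heq p => ?_, fun heq => le_antisymm
    (totalDelay_le_sum_mul_demand hh fun p => (heq p).mono fun _ ht hpos => (ht hpos).le)
    (sum_mul_demand_le_totalDelay hh hu)⟩
  have hnonneg := ae_nonneg_sub_mul_of_mem_feasibleFlows hh hu
  have hsum : ∑ p, ∫ t, (Ψ p t - u (od p)) * h p t ∂μ = 0 := by
    rwa [totalDelay_eq_add_sum_excess hh u, add_eq_left] at heq
  have hzero : ∫ t, (Ψ p t - u (od p)) * h p t ∂μ = 0 :=
    (Finset.sum_eq_zero_iff_of_nonneg fun p _ => integral_nonneg_of_ae (hnonneg p)).1 hsum p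
      (Finset.mem_univ p)
  filter_upwards [(integral_eq_zero_iff_of_nonneg_ae (hnonneg p)
    (integrable_sub_const_mul _ _ _)).1 hzero] with t ht hpos
  exact sub_eq_zero.1 ((mul_eq_zero.1 ht).resolve_right hpos.ne')

theorem exists_mem_feasibleFlows_totalDelay_le (hQ : ∀ w, 0 ≤ Q w)
    (hu : ∀ w, ∃ p, od p = w ∧ ∃ᶠ t in ae μ, Ψ p t < u w) :
    ∃ h ∈ feasibleFlows μ r od Q, totalDelay Ψ h ≤ ∑ w, u w * Q w := by
  classical
  choose path hpath hfreq using hu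
  have hmeas : ∀ w, MeasurableSet {t | Ψ (path w) t < u w} := fun w =>
    measurableSet_lt (Lp.stronglyMeasurable _).measurable measurable_const
  choose g hg_nonneg hg_support hg_integral using fun w =>
    exists_Lp_nonneg_integral_eq r (hmeas w) (frequently_ae_iff.1 (hfreq w))
      (measure_ne_top μ _) (hQ w)
  have hmem := concentratedFlow_mem_feasibleFlows hpath hg_nonneg hg_integral
  refine ⟨concentratedFlow od path g, hmem, totalDelay_le_sum_mul_demand hmem fun p => ?_⟩
  by_cases hp : p = path (od p)
  · filter_upwards [hg_support (od p)] with t ht hpos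
    rw [concentratedFlow, if_pos hp] at hpos
    have hlt : Ψ (path (od p)) t < u (od p) := by_contra fun hnotMem => hpos.ne' (ht hnotMem)
    rw [← hp] at hlt
    exact hlt.le
  · filter_upwards [Lp.coeFn_zero ℝ r μ] with t ht hpos
    simp only [concentratedFlow, if_neg hp, ht, Pi.zero_apply, lt_irrefl] at hpos

theorem isGLB_totalDelay_image_feasibleFlows [NeZero μ] (hQ : ∀ w, 0 ≤ Q w)
    (hbdd : ∀ p, (ae μ).IsBoundedUnder (· ≥ ·) (Ψ p))
    (hv : ∀ w, IsLeast {x | ∃ p, od p = w ∧ x = essInf (Ψ p) μ} (v w)) :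
    IsGLB (totalDelay Ψ '' feasibleFlows μ r od Q) (∑ w, v w * Q w) := by
  refine ⟨Set.forall_mem_image.2 fun h hh =>
    sum_mul_demand_le_totalDelay hh (ae_le_of_isLeast_essInf hbdd hv), fun b hb => ?_⟩
  have hlim : Tendsto (fun ε => ∑ w, (v w + ε) * Q w) (𝓝[>] 0) (𝓝 (∑ w, v w * Q w)) :=
    (Continuous.tendsto' (by fun_prop) 0 _ (by simp)).mono_left nhdsWithin_le_nhds
  refine ge_of_tendsto hlim (eventually_mem_nhdsWithin.mono fun ε (hε : 0 < ε) => ?_)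
  have hfreq : ∀ w, ∃ p, od p = w ∧ ∃ᶠ t in ae μ, Ψ p t < v w + ε := fun w => by
    obtain ⟨p, hp, hvp⟩ := (hv w).1
    exact ⟨p, hp, frequently_lt_of_essInf_lt (hvp ▸ lt_add_of_pos_right _ hε)⟩
  obtain ⟨h, hh, hle⟩ := exists_mem_feasibleFlows_totalDelay_le (r := r) hQ hfreq
  exact (hb ⟨h, hh, rfl⟩).trans hle

end Flows

theorem due_iff_variational_inequality_general {α ι W : Type*} [MeasurableSpace α]
    {μ : Measure α} [IsFiniteMeasure μ] [NeZero μ] [Fintype ι] [DecidableEq W] {r s : ℝ≥0∞}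
    [s.HolderConjugate r] {od : ι → W} {Q : W → ℝ} {hstar : ι → Lp ℝ r μ}
    (hmem : hstar ∈ feasibleFlows μ r od Q) {Ψ : ι → Lp ℝ s μ}
    (hbdd : ∀ p, (ae μ).IsBoundedUnder (· ≥ ·) (Ψ p)) {v : W → ℝ}
    (hv : ∀ w, IsLeast {x | ∃ p, od p = w ∧ x = essInf (Ψ p) μ} (v w)) :
    (∀ p, ∀ᵐ t ∂μ, 0 < hstar p t → Ψ p t = v (od p)) ↔
      ∀ h ∈ feasibleFlows μ r od Q, 0 ≤ ∑ p, ∫ t, Ψ p t * (h p t - hstar p t) ∂μ := by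
  have hsurj : Function.Surjective od := fun w => (hv w).1.imp fun _ hp => hp.1
  have := Finite.of_surjective od hsurj
  cases nonempty_fintype W
  have hle := ae_le_of_isLeast_essInf hbdd hv
  have hglb : IsGLB (totalDelay Ψ '' feasibleFlows μ r od Q) (∑ w, v w * Q w) :=
    isGLB_totalDelay_image_feasibleFlows (demand_nonneg_of_mem_feasibleFlows hmem) hbdd hv
  simp only [← totalDelay_eq_sum_mul_demand_iff hmem hle,
    sum_integral_mul_sub_eq_totalDelay_sub, sub_nonneg]
  constructor
  · intro heq h hh
    exact heq.trans_le (sum_mul_demand_le_totalDelay hh hle)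
  · intro hmin
    exact le_antisymm (hglb.2 (Set.forall_mem_image.2 hmin))
      (sum_mul_demand_le_totalDelay hmem hle)

instance isFiniteMeasure_timeMeasure (t0 tf : ℝ) : IsFiniteMeasure (timeMeasure t0 tf) :=
  inferInstanceAs (IsFiniteMeasure (volume.restrict (Set.Icc t0 tf)))

theorem neZero_timeMeasure {t0 tf : ℝ} (ht : t0 < tf) : NeZero (timeMeasure t0 tf) :=
  ⟨by simpa [timeMeasure, Measure.restrict_eq_zero] using ht⟩

/-- **Equivalence of dynamic user equilibrium and the variational inequality**
(Friesz et al. 1993).  Here `Ψ p` is the (nonnegative, `L²`) effective delay of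
path `p` evaluated at the fixed flow `h*`, and `v w` is the minimum over paths
`p` connecting OD pair `w` of the essential infimum of `Ψ p`.  Then `h*` is a
dynamic user equilibrium iff it solves `VI(Ψ, Λ₀)`. -/
theorem due_iff_variational_inequality
    (t0 tf : ℝ) (ht : t0 < tf)
    (W ι : Type) [Fintype W] [Nonempty W] [DecidableEq W] [Fintype ι]
    (od : ι → W) (hod : Function.Surjective od)
    (Q : W → ℝ) (hQ : ∀ w, 0 ≤ Q w)
    (hstar : PiLp 2 fun _ : ι => Lp ℝ 2 (timeMeasure t0 tf))
    (hmem : hstar ∈ Lambda0 t0 tf od Q)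
    (Ψ : ι → Lp ℝ 2 (timeMeasure t0 tf))
    (hΨ : ∀ p, ∀ᵐ t ∂(timeMeasure t0 tf), 0 ≤ (Ψ p) t)
    (v : W → ℝ)
    (hv : ∀ w, IsLeast
      {x : ℝ | ∃ p, od p = w ∧ x = essInf (fun t => (Ψ p) t) (timeMeasure t0 tf)}
      (v w)) :
    (∀ p, ∀ᵐ t ∂(timeMeasure t0 tf), 0 < (hstar p) t → (Ψ p) t = v (od p)) ↔
    (∀ h ∈ Lambda0 t0 tf od Q,
        0 ≤ ∑ p, ∫ t, (Ψ p) t * ((h p) t - (hstar p) t) ∂(timeMeasure t0 tf)) := by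
  have := neZero_timeMeasure ht
  exact (due_iff_variational_inequality_general (hstar := hstar.ofLp) hmem
    (fun p => isBoundedUnder_of_eventually_ge (hΨ p)) hv).trans
    (WithLp.equiv 2 _).symm.forall_congr_left
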